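/- Let A be a 10×10 0-1 matrix with finite stable index. Then θ(A) = g(10) = 21 if and only if A is permutation similar to one of the following: (i) [[C_3, X],[0, C_7]] or [[C_7, X],[0, C_3]] where X is a 0-1 matrix with exactly one nonzero entry; (ii) [[C_4, u, 0],[0, 0, vᵀ],[0, 0, C_5]] or [[C_5, u, 0],[0, 0, vᵀ],[0, 0, C_4]] where u and v are 0-1 column vectors each having exactly one nonzero entry. -/

import Mathlib

/-- A matrix over ℕ is a 0-1 matrix iff all its entries are at most 1. -/
def IsZO {α β : Type*} (A : Matrix α β ℕ) : Prop := ∀ i j, A i j ≤ 1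

/-- The stable index of a 0-1 matrix: the smallest positive `k` with `A ^ (k+1)`
not a 0-1 matrix, or `⊤` if no such `k` exists. -/
noncomputable def theta {α : Type*} [Fintype α] [DecidableEq α]
    (A : Matrix α α ℕ) : ℕ∞ :=
  sInf ((fun k : ℕ => (k : ℕ∞)) '' {k : ℕ | 1 ≤ k ∧ ¬ IsZO (A ^ (k + 1))})

/-- `g(n)` from the paper. -/
def g (n : ℕ) : ℕ :=
  if n % 2 = 1 then (n ^ 2 - 1) / 4
  else if n % 4 = 0 then (n ^ 2 - 4) / 4
  else (n ^ 2 - 16) / 4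

/-- Basic circulant 0-1 matrix of order `n`. -/
def Cmat (n : ℕ) : Matrix (Fin n) (Fin n) ℕ :=
  Matrix.of fun i j => if (j : ℕ) = ((i : ℕ) + 1) % n then 1 else 0

/-- Condition (★) on `(n, p, q)`. -/
def StarCond (n p q : ℕ) : Prop :=
  p + q = n ∧
  ((n % 2 = 1 ∧ ({p, q} : Finset ℕ) = {(n + 1) / 2, (n - 1) / 2}) ∨
   (n % 4 = 0 ∧ ({p, q} : Finset ℕ) = {(n + 2) / 2, (n - 2) / 2}) ∨
   (n % 4 = 2 ∧ ({p, q} : Finset ℕ) = {(n + 4) / 2, (n - 4) / 2}))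

/-- The block matrix `[[C_p, u, 0], [0, 0, vᵀ], [0, 0, C_q]]`. -/
def Hmat (p q : ℕ) (u : Fin p → ℕ) (v : Fin q → ℕ) :
    Matrix (Fin p ⊕ Unit ⊕ Fin q) (Fin p ⊕ Unit ⊕ Fin q) ℕ :=
  Matrix.of fun i j =>
    match i, j with
    | Sum.inl a, Sum.inl b => Cmat p a b
    | Sum.inl a, Sum.inr (Sum.inl _) => u a
    | Sum.inr (Sum.inl _), Sum.inr (Sum.inr b) => v b
    | Sum.inr (Sum.inr a), Sum.inr (Sum.inr b) => Cmat q a b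
    | _, _ => 0

open Function

theorem cycle_injective {α : Type*} {c : ℕ → α} {p : ℕ} (hinj : ∀ s t, c s = c t ↔ s % p = t % p) :
    Injective (fun t : Fin p => c t) := by
  intro s t hst
  have := (hinj _ _).1 hst
  rw [Nat.mod_eq_of_lt s.2, Nat.mod_eq_of_lt t.2] at this
  exact Fin.ext this

section Walks

variable {α : Type*} [Fintype α] [DecidableEq α] {A : Matrix α α ℕ}

/-- There is a walk of length `m` from `i` to `j` in the digraph of `A`. -/
def HasWalk (A : Matrix α α ℕ) (m : ℕ) (i j : α) : Prop := 0 < (A ^ m) i j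

/-- Some walk leads from `i` to `j`. -/
def Reaches (A : Matrix α α ℕ) (i j : α) : Prop := ∃ m, HasWalk A m i j

/-- `p` is the least positive length of a closed walk at `x`. -/
def IsPeriod (A : Matrix α α ℕ) (x : α) (p : ℕ) : Prop :=
  IsLeast {m | 0 < m ∧ HasWalk A m x x} p

theorem hasWalk_zero {i j : α} : HasWalk A 0 i j ↔ i = j := by
  by_cases h : i = j <;> simp [HasWalk, h]

theorem hasWalk_one {i j : α} : HasWalk A 1 i j ↔ 0 < A i j := by
  simp [HasWalk]

theorem hasWalk_add {m n : ℕ} {i j : α} :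
    HasWalk A (m + n) i j ↔ ∃ k, HasWalk A m i k ∧ HasWalk A n k j := by
  simp [HasWalk, pow_add, Matrix.mul_apply, Finset.sum_pos_iff]

theorem HasWalk.append {m n : ℕ} {i k j : α} (h : HasWalk A m i k) (h' : HasWalk A n k j) :
    HasWalk A (m + n) i j :=
  hasWalk_add.2 ⟨k, h, h'⟩

theorem HasWalk.congr {m n : ℕ} {i j : α} (h : HasWalk A m i j) (e : m = n) :
    HasWalk A n i j := e ▸ h

theorem HasWalk.repeat {m : ℕ} {i : α} (h : HasWalk A m i i) (t : ℕ) :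
    HasWalk A (m * t) i i := by
  induction t with
  | zero => exact hasWalk_zero.2 rfl
  | succ t ih => exact ih.append h

theorem HasWalk.of_dvd {m n : ℕ} {i : α} (h : HasWalk A m i i) (hn : m ∣ n) :
    HasWalk A n i i := by
  obtain ⟨t, rfl⟩ := hn
  exact h.repeat t

theorem Reaches.trans {i j k : α} (h : Reaches A i j) (h' : Reaches A j k) : Reaches A i k :=
  let ⟨_, a⟩ := h
  let ⟨_, b⟩ := h'
  ⟨_, a.append b⟩

theorem HasWalk.reaches {m : ℕ} {i j : α} (h : HasWalk A m i j) : Reaches A i j := ⟨m, h⟩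

theorem Reaches.refl (i : α) : Reaches A i i := ⟨0, hasWalk_zero.2 rfl⟩

/-- Two walks of equal length between the same endpoints coincide at every time, if the
corresponding power of `A` is a 0-1 matrix. -/
theorem HasWalk.unique {m n : ℕ} {i j k k' : α} (hZ : IsZO (A ^ (m + n)))
    (h₁ : HasWalk A m i k) (h₂ : HasWalk A n k j) (h₃ : HasWalk A m i k')
    (h₄ : HasWalk A n k' j) : k = k' := by
  by_contra hne
  have hle := hZ i j
  rw [pow_add, Matrix.mul_apply] at hle
  have hsub : ∑ x ∈ {k, k'}, (A ^ m) i x * (A ^ n) x j ≤ ∑ x, (A ^ m) i x * (A ^ n) x j :=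
    Finset.sum_le_sum_of_subset (Finset.subset_univ _)
  rw [Finset.sum_pair hne] at hsub
  have a := Nat.mul_pos h₁ h₂
  have b := Nat.mul_pos h₃ h₄
  unfold HasWalk at *
  omega

theorem exists_hasWalk_ne {m : ℕ} (h₁ : IsZO A) (hm : IsZO (A ^ m))
    (hm' : ¬ IsZO (A ^ (m + 1))) : ∃ i j k k', k ≠ k' ∧ HasWalk A 1 i k ∧ HasWalk A m k j ∧
      HasWalk A 1 i k' ∧ HasWalk A m k' j := by
  unfold IsZO at hm'
  push Not at hm'
  obtain ⟨i, j, hij⟩ := hm'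
  rw [pow_succ', Matrix.mul_apply] at hij
  have hterm : ∀ x, A i x * (A ^ m) x j ≤ 1 := fun x => by
    simpa using Nat.mul_le_mul (h₁ i x) (hm x j)
  have hpos : ∃ k ∈ Finset.univ, 0 < A i k * (A ^ m) k j :=
    Finset.sum_pos_iff.1 (by omega)
  obtain ⟨k, -, hk⟩ := hpos
  rw [← Finset.add_sum_erase _ _ (Finset.mem_univ k)] at hij
  have hpos' : ∃ k' ∈ Finset.univ.erase k, 0 < A i k' * (A ^ m) k' j :=
    Finset.sum_pos_iff.1 (by have := hterm k; omega)
  obtain ⟨k', hk', hk'pos⟩ := hpos'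
  refine ⟨i, j, k, k', (Finset.ne_of_mem_erase hk').symm, ?_⟩
  simp only [hasWalk_one]
  exact ⟨Nat.pos_of_mul_pos_right hk, Nat.pos_of_mul_pos_left hk,
    Nat.pos_of_mul_pos_right hk'pos, Nat.pos_of_mul_pos_left hk'pos⟩

theorem HasWalk.exists_vertices {m : ℕ} {i j : α} (h : HasWalk A m i j) :
    ∃ w : ℕ → α, w 0 = i ∧ w m = j ∧ ∀ t < m, HasWalk A 1 (w t) (w (t + 1)) := by
  induction m generalizing i with
  | zero => exact ⟨fun _ => i, rfl, hasWalk_zero.1 h, by simp⟩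
  | succ m ih =>
    rw [add_comm, hasWalk_add] at h
    obtain ⟨k, hk, hkj⟩ := h
    obtain ⟨w, h0, hm, hw⟩ := ih hkj
    refine ⟨fun t => Nat.casesOn t i w, rfl, hm, ?_⟩
    rintro (_ | t) ht
    · simpa [h0] using hk
    · exact hw t (by omega)

theorem hasWalk_of_steps {w : ℕ → α} {m : ℕ} (hw : ∀ t < m, HasWalk A 1 (w t) (w (t + 1)))
    {s t : ℕ} (hst : s ≤ t) (ht : t ≤ m) : HasWalk A (t - s) (w s) (w t) := by
  induction t, hst using Nat.le_induction with
  | base => simp [hasWalk_zero]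
  | succ t hst ih => exact ((ih (by omega)).append (hw t (by omega))).congr (by omega)

/-- A long walk runs through a closed walk. -/
theorem HasWalk.exists_closed {m : ℕ} {i j : α} (h : HasWalk A m i j)
    (hm : Fintype.card α ≤ m) : ∃ z a b c, 0 < c ∧ a + c + b = m ∧
      HasWalk A a i z ∧ HasWalk A c z z ∧ HasWalk A b z j := by
  obtain ⟨w, h0, hwm, hw⟩ := h.exists_vertices
  obtain ⟨s, t, hne, hst⟩ := Fintype.exists_ne_map_eq_of_card_lt
    (fun t : Fin (m + 1) => w t) (by simp; omega)
  wlog hlt : s < t generalizing s t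
  · exact this t s hne.symm hst.symm (lt_of_le_of_ne (not_lt.1 hlt) hne.symm)
  have hs := s.2
  have ht := t.2
  have hlt' : (s : ℕ) < t := hlt
  refine ⟨w s, s, m - t, t - s, by omega, by omega, ?_, ?_, ?_⟩
  · simpa [h0] using hasWalk_of_steps hw (Nat.zero_le s) (by omega)
  · simpa only [← hst] using hasWalk_of_steps hw hlt'.le (by omega)
  · simpa [hwm, hst] using hasWalk_of_steps hw (show (t : ℕ) ≤ m by omega) le_rfl

theorem Reaches.exists_short {i j : α} (h : Reaches A i j) :
    ∃ m < Fintype.card α, HasWalk A m i j := by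
  classical
  refine ⟨Nat.find h, ?_, Nat.find_spec h⟩
  by_contra hlt
  obtain ⟨z, a, b, c, hc, habc, ha, -, hb⟩ := (Nat.find_spec h).exists_closed (not_lt.1 hlt)
  exact Nat.find_min h (by omega) (ha.append hb)

theorem HasWalk.exists_isPeriod {m : ℕ} {x : α} (hm : 0 < m) (h : HasWalk A m x x) :
    ∃ p, IsPeriod A x p :=
  ⟨_, Nat.sInf_mem (s := {m | 0 < m ∧ HasWalk A m x x}) ⟨m, hm, h⟩, fun _ => Nat.sInf_le⟩

theorem IsPeriod.pos {x : α} {p : ℕ} (h : IsPeriod A x p) : 0 < p := h.1.1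

theorem IsPeriod.hasWalk {x : α} {p : ℕ} (h : IsPeriod A x p) : HasWalk A p x x := h.1.2

/-- The vertices of a shortest closed walk, indexed periodically. -/
theorem IsPeriod.exists_cycle {x : α} {p : ℕ} (h : IsPeriod A x p) :
    ∃ c : ℕ → α, c 0 = x ∧ (∀ t n, HasWalk A n (c t) (c (t + n))) ∧
      ∀ s t, c s = c t ↔ s % p = t % p := by
  obtain ⟨w, h0, hp, hw⟩ := h.hasWalk.exists_vertices
  have hpos := h.pos
  have hstep : ∀ t, HasWalk A 1 (w (t % p)) (w ((t + 1) % p)) := fun t => by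
    have hlt := Nat.mod_lt t hpos
    have := hw _ hlt
    rcases Nat.lt_or_ge (t % p + 1) p with h1 | h1
    · rwa [Nat.add_mod, Nat.mod_eq_of_lt (a := 1) (by omega), Nat.mod_eq_of_lt h1]
    · have e : t % p + 1 = p := by omega
      have e' : (t + 1) % p = 0 := by
        rw [← Nat.mod_add_mod, e, Nat.mod_self]
      rw [e, hp] at this
      rwa [e', h0]
  refine ⟨fun t => w (t % p), by simp [h0], fun t n => ?_, fun s t => ⟨?_, ?_⟩⟩
  · simpa using hasWalk_of_steps (m := t + n) (fun s _ => hstep s) (Nat.le_add_right t n) le_rfl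
  · suffices H : ∀ a b, a < b → b < p → w a ≠ w b by
      intro hst
      have hs := Nat.mod_lt s hpos
      have ht := Nat.mod_lt t hpos
      rcases lt_trichotomy (s % p) (t % p) with hlt | heq | hlt
      · exact absurd hst (H _ _ hlt ht)
      · exact heq
      · exact absurd hst.symm (H _ _ hlt hs)
    intro a b hab hb heq
    have h1 := hasWalk_of_steps hw (Nat.zero_le a) (by omega)
    have h2 := hasWalk_of_steps hw hb.le le_rfl
    rw [← heq, hp] at h2
    rw [h0] at h1
    have := h.2 ⟨by omega, h1.append h2⟩
    omega
  · intro hst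
    simp only [hst]

theorem cycle_reaches {c : ℕ → α} {p : ℕ} (hp : 0 < p)
    (hc : ∀ t n, HasWalk A n (c t) (c (t + n))) (hinj : ∀ s t, c s = c t ↔ s % p = t % p)
    (s t : ℕ) : Reaches A (c s) (c t) := by
  have h := (hc s (p * s - s + t)).reaches
  have hle := Nat.le_mul_of_pos_left s hp
  rwa [(hinj (s + (p * s - s + t)) t).2] at h
  rw [show s + (p * s - s + t) = t + p * s by omega, Nat.add_mul_mod_self_left]

end Walks

section Periods

variable {α : Type*} [Fintype α] [DecidableEq α] {A : Matrix α α ℕ}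

theorem step_unique (hZ : ∀ m ≤ 2 * Fintype.card α, IsZO (A ^ m)) {x y y' : α}
    (hy : HasWalk A 1 x y) (hyx : Reaches A y x) (hy' : HasWalk A 1 x y')
    (hyx' : Reaches A y' x) : y = y' := by
  obtain ⟨a, ha, hwa⟩ := hyx.exists_short
  obtain ⟨b, hb, hwb⟩ := hyx'.exists_short
  refine HasWalk.unique (hZ (1 + (a + (1 + b))) (by omega)) hy (hwa.append (hy'.append hwb)) hy' ?_
  exact (hwb.append (hy.append hwa)).congr (by omega)

/-- Walks of equal length that stay in the strong component of `x` have the same end. -/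
theorem walk_unique (hZ : ∀ m ≤ 2 * Fintype.card α, IsZO (A ^ m)) {m : ℕ} {x y y' : α}
    (hy : HasWalk A m x y) (hyx : Reaches A y x) (hy' : HasWalk A m x y')
    (hyx' : Reaches A y' x) : y = y' := by
  induction m generalizing x with
  | zero => exact (hasWalk_zero.1 hy).symm.trans (hasWalk_zero.1 hy')
  | succ m ih =>
    rw [add_comm, hasWalk_add] at hy hy'
    obtain ⟨z, hxz, hzy⟩ := hy
    obtain ⟨z', hxz', hzy'⟩ := hy'
    obtain rfl := step_unique hZ hxz (hzy.reaches.trans hyx) hxz' (hzy'.reaches.trans hyx')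
    exact ih hzy (hyx.trans hxz.reaches) hzy' (hyx'.trans hxz.reaches)

theorem IsPeriod.dvd (hZ : ∀ m ≤ 2 * Fintype.card α, IsZO (A ^ m)) {x : α} {p m : ℕ}
    (h : IsPeriod A x p) (hm : HasWalk A m x x) : p ∣ m := by
  rw [← Nat.div_add_mod m p, hasWalk_add] at hm
  obtain ⟨z, hxz, hzx⟩ := hm
  obtain rfl := walk_unique hZ hxz hzx.reaches (h.hasWalk.repeat _) (Reaches.refl x)
  refine Nat.dvd_of_mod_eq_zero (Nat.eq_zero_of_not_pos fun hpos => ?_)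
  exact absurd (h.2 ⟨hpos, hzx⟩) (not_le.2 (Nat.mod_lt m h.pos))

theorem IsPeriod.dvd_of_reaches (hZ : ∀ m ≤ 2 * Fintype.card α, IsZO (A ^ m)) {x z : α}
    {p m : ℕ} (h : IsPeriod A x p) (hxz : Reaches A x z) (hzx : Reaches A z x)
    (hm : HasWalk A m z z) : p ∣ m := by
  obtain ⟨a, ha⟩ := hxz
  obtain ⟨b, hb⟩ := hzx
  have h₁ := h.dvd hZ (ha.append hb)
  have h₂ := h.dvd hZ ((ha.append hm).append hb)
  rw [show a + m + b = a + b + m by ring] at h₂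
  exact (Nat.dvd_add_right h₁).1 h₂

theorem IsPeriod.eq_of_reaches (hZ : ∀ m ≤ 2 * Fintype.card α, IsZO (A ^ m)) {x z : α}
    {p q : ℕ} (h : IsPeriod A x p) (h' : IsPeriod A z q) (hxz : Reaches A x z)
    (hzx : Reaches A z x) : p = q :=
  Nat.dvd_antisymm (h.dvd_of_reaches hZ hxz hzx h'.hasWalk)
    (h'.dvd_of_reaches hZ hzx hxz h.hasWalk)

theorem HasWalk.exists_isPeriod_of_card_le (hZ : ∀ m ≤ 2 * Fintype.card α, IsZO (A ^ m))
    {m : ℕ} {i j : α} (h : HasWalk A m i j) (hm : Fintype.card α ≤ m) :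
    ∃ z p a b, IsPeriod A z p ∧ HasWalk A a i z ∧ HasWalk A b z j ∧ a + b + p = m := by
  obtain ⟨z, a, b, c, hc, habc, ha, hcz, hb⟩ := h.exists_closed hm
  obtain ⟨p, hp⟩ := hcz.exists_isPeriod hc
  have hle := hp.2 ⟨hc, hcz⟩
  have hdvd : p ∣ c - p := Nat.dvd_sub (hp.dvd hZ hcz) dvd_rfl
  exact ⟨z, p, a, c - p + b, hp, ha, (hp.hasWalk.of_dvd hdvd).append hb, by omega⟩

/-- A walk through `z`, whose vertices on cycles all lie in the strong component of `z`, can be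
shortened by multiples of the period of `z` until it avoids repetitions, and then it leaves room
for every cycle that is not linked with `z`. -/
theorem exists_short_walk_through (hZ : ∀ m ≤ 2 * Fintype.card α, IsZO (A ^ m))
    (hsep : ∀ x y p q, IsPeriod A x p → IsPeriod A y q → Reaches A x y → Reaches A y x)
    {i j z z' : α} {a b p q : ℕ} (hp : IsPeriod A z p) (hq : IsPeriod A z' q)
    (hzz' : ¬ Reaches A z z') (ha : HasWalk A a i z) (hb : HasWalk A b z j) :
    ∃ y c d, IsPeriod A y p ∧ HasWalk A c i y ∧ HasWalk A d y j ∧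
      (c + d) ≡ (a + b) [MOD p] ∧ c + d + 1 + q ≤ Fintype.card α := by
  classical
  have hz'z : ¬ Reaches A z' z := fun h => hzz' (hsep _ _ _ _ hq hp h)
  have hex : ∃ n y c d, Reaches A y z ∧ Reaches A z y ∧ HasWalk A c i y ∧ HasWalk A d y j ∧
      (c + d) ≡ (a + b) [MOD p] ∧ c + d = n :=
    ⟨a + b, z, a, b, .refl z, .refl z, ha, hb, rfl, rfl⟩
  obtain ⟨y, c, d, hyz, hzy, hc, hd, hmod, hn⟩ := Nat.find_spec hex
  have hy : IsPeriod A y p := by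
    obtain ⟨e, he⟩ := hyz
    obtain ⟨f, hf⟩ := hzy
    have hpos := hp.pos
    obtain ⟨r, hr⟩ := ((he.append hp.hasWalk).append hf).exists_isPeriod (by omega)
    rwa [hp.eq_of_reaches hZ hr hf.reaches he.reaches]
  refine ⟨y, c, d, hy, hc, hd, hmod, ?_⟩
  obtain ⟨u, hu0, huc, hu⟩ := hc.exists_vertices
  obtain ⟨v, hv0, hvd, hv⟩ := hd.exists_vertices
  let w : ℕ → α := fun t => if t ≤ c then u t else v (t - c)
  have hwc : w c = y := by simp [w, huc]
  have hw0 : w 0 = i := by simp [w, hu0]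
  have hwn : w (c + d) = j := by
    rcases Nat.eq_zero_or_pos d with rfl | hd0
    · rw [add_zero, hwc, ← hv0, hvd]
    · simp [w, hvd, show d ≠ 0 by omega]
  have hw : ∀ t < c + d, HasWalk A 1 (w t) (w (t + 1)) := by
    intro t ht
    rcases lt_trichotomy t c with h | rfl | h
    · simpa [w, h.le, Nat.succ_le_of_lt h] using hu t h
    · simpa [w, huc, hv0] using hv 0 (by omega)
    · have := hv (t - c) (by omega)
      simpa [w, show ¬ t ≤ c by omega, show ¬ t + 1 ≤ c by omega,
        show t + 1 - c = t - c + 1 by omega] using this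
  have hlink : ∀ t ≤ c + d, Reaches A (w t) y ∨ Reaches A y (w t) := by
    intro t ht
    rcases le_total t c with h | h
    · exact .inl (hwc ▸ (hasWalk_of_steps hw h (by omega)).reaches)
    · exact .inr (hwc ▸ (hasWalk_of_steps hw h ht).reaches)
  have hwinj : ∀ s t, s < t → t ≤ c + d → w s ≠ w t := by
    intro s t hst ht heq
    have hclosed := hasWalk_of_steps hw hst.le ht
    rw [← heq] at hclosed
    obtain ⟨r, hr⟩ := hclosed.exists_isPeriod (by omega)
    have hback : Reaches A (w s) z ∧ Reaches A z (w s) := by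
      rcases hlink s (by omega) with h | h
      · exact ⟨h.trans hyz, hsep _ _ _ _ hr hp (h.trans hyz)⟩
      · exact ⟨hsep _ _ _ _ hp hr (hzy.trans h), hzy.trans h⟩
    obtain ⟨e, he⟩ := hp.dvd_of_reaches hZ hback.2 hback.1 hclosed
    have h₁ := hasWalk_of_steps hw (Nat.zero_le s) (by omega)
    have h₂ := hasWalk_of_steps hw ht le_rfl
    rw [hw0] at h₁
    rw [hwn, ← heq] at h₂
    refine Nat.find_min hex (m := s - 0 + (c + d - t)) (by omega)
      ⟨w s, _, _, hback.1, hback.2, h₁, h₂, Nat.ModEq.trans ?_ hmod, rfl⟩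
    have : c + d = s - 0 + (c + d - t) + p * e := by omega
    unfold Nat.ModEq
    conv_rhs => rw [this, Nat.add_mul_mod_self_left]
  obtain ⟨k, hk0, hk, hkinj⟩ := hq.exists_cycle
  have hkz' : ∀ t, Reaches A z' (k t) ∧ Reaches A (k t) z' := fun t =>
    ⟨hk0 ▸ cycle_reaches hq.pos hk hkinj 0 t, hk0 ▸ cycle_reaches hq.pos hk hkinj t 0⟩
  let F : Fin (c + d + 1) ⊕ Fin q → α := Sum.elim (fun t => w t) (fun t => k t)
  have hF : Injective F := by
    refine Injective.sumElim ?_ ?_ ?_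
    · intro s t hst
      have hs := s.2
      have ht := t.2
      rcases lt_trichotomy (s : ℕ) t with h | h | h
      · exact absurd hst (hwinj _ _ h (by omega))
      · exact Fin.ext h
      · exact absurd hst.symm (hwinj _ _ h (by omega))
    · exact cycle_injective hkinj
    · intro s t hst
      have hs := s.2
      rcases hlink s (by omega) with h | h
      · rw [hst] at h
        exact hz'z (((hkz' t).1.trans h).trans hyz)
      · rw [hst] at h
        exact hzz' ((hzy.trans h).trans (hkz' t).2)
  simpa using Fintype.card_le_of_injective F hF

end Periods

section Structure

variable {A : Matrix (Fin 10) (Fin 10) ℕ}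

theorem IsZO.pow_le_two_mul_card (hZ : ∀ m ≤ 21, IsZO (A ^ m)) :
    ∀ m ≤ 2 * Fintype.card (Fin 10), IsZO (A ^ m) := fun m hm =>
  hZ m (by simp at hm; omega)

theorem not_reaches_of_period_ne (hZ : ∀ m ≤ 21, IsZO (A ^ m))
    (hsep : ∀ x y p q, IsPeriod A x p → IsPeriod A y q → Reaches A x y → Reaches A y x)
    {x y : Fin 10} {p q : ℕ} (hp : IsPeriod A x p) (hq : IsPeriod A y q) (hne : p ≠ q) :
    ¬ Reaches A x y := fun h =>
  hne (hp.eq_of_reaches (IsZO.pow_le_two_mul_card hZ) hq h (hsep _ _ _ _ hp hq h))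

/-- If distinct cycles are never linked, then the power with exponent 22 is a 0-1 matrix as well. -/
theorem exists_linked_cycles (hZ : ∀ m ≤ 21, IsZO (A ^ m)) (h22 : ¬ IsZO (A ^ 22)) :
    ∃ x y p q, IsPeriod A x p ∧ IsPeriod A y q ∧ Reaches A x y ∧ ¬ Reaches A y x := by
  by_contra hcon
  have hsep : ∀ x y p q, IsPeriod A x p → IsPeriod A y q → Reaches A x y → Reaches A y x := by
    intro x y p q hp hq hxy
    by_contra h
    exact hcon ⟨x, y, p, q, hp, hq, hxy, h⟩
  have hZ' := IsZO.pow_le_two_mul_card hZ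
  obtain ⟨i, j, k, k', hkk', hik, hkj, hik', hkj'⟩ :=
    exists_hasWalk_ne (m := 21) (by simpa using hZ 1 (by omega)) (hZ 21 le_rfl) h22
  obtain ⟨z, p, a, b, hp, ha, hb, hab⟩ := hkj.exists_isPeriod_of_card_le hZ' (by simp)
  obtain ⟨z', q, a', b', hq, ha', hb', hab'⟩ := hkj'.exists_isPeriod_of_card_le hZ' (by simp)
  have hp0 := hp.pos
  have hq0 := hq.pos
  have hpq : p ≠ q := by
    rintro rfl
    exact hkk' (HasWalk.unique (hZ (1 + (a + b)) (by omega)) hik (ha.append hb) hik'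
      ((ha'.append hb').congr (by omega)))
  have hzz' := not_reaches_of_period_ne hZ hsep hp hq hpq
  have hz'z := not_reaches_of_period_ne hZ hsep hq hp hpq.symm
  have hiz := hik.append ha
  have hiz' := hik'.append ha'
  have hcount : p + q + 2 ≤ 10 := by
    obtain ⟨c, hc0, hc, hcinj⟩ := hp.exists_cycle
    obtain ⟨d, hd0, hd, hdinj⟩ := hq.exists_cycle
    have hzc : ∀ t, Reaches A z (c t) := fun t => hc0 ▸ cycle_reaches hp0 hc hcinj 0 t
    have hcz : ∀ t, Reaches A (c t) z := fun t => hc0 ▸ cycle_reaches hp0 hc hcinj t 0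
    have hzd : ∀ t, Reaches A z' (d t) := fun t => hd0 ▸ cycle_reaches hq0 hd hdinj 0 t
    have hdz : ∀ t, Reaches A (d t) z' := fun t => hd0 ▸ cycle_reaches hq0 hd hdinj t 0
    have hij : i ≠ j := by
      rintro rfl
      exact hzz' (hb.reaches.trans hiz'.reaches)
    let F : Fin 2 ⊕ Fin p ⊕ Fin q → Fin 10 :=
      Sum.elim ![i, j] (Sum.elim (fun t => c t) (fun t => d t))
    have hF : Injective F := by
      refine Injective.sumElim ?_ (Injective.sumElim (cycle_injective hcinj)
        (cycle_injective hdinj) ?_) ?_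
      · intro s t
        fin_cases s <;> fin_cases t <;> simp [hij, hij.symm]
      · intro s t hst
        exact hzz' ((hst ▸ hzc s).trans (hdz t))
      · intro s t hst
        rcases t with t | t <;> simp only [Sum.elim_inl, Sum.elim_inr] at hst <;> fin_cases s
        · exact hzz' ((show i = c t from hst) ▸ hzc t |>.trans hiz'.reaches)
        · exact hz'z (hb'.reaches.trans ((show j = c t from hst) ▸ hcz t))
        · exact hz'z ((show i = d t from hst) ▸ hzd t |>.trans hiz.reaches)
        · exact hzz' (hb.reaches.trans ((show j = d t from hst) ▸ hdz t))
    have := Fintype.card_le_of_injective F hF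
    simp at this
    omega
  obtain ⟨y, c, d, hy, hc, hd, hmod, hle⟩ :=
    exists_short_walk_through hZ' hsep hp hq hzz' hiz hb
  obtain ⟨y', c', d', hy', hc', hd', hmod', hle'⟩ :=
    exists_short_walk_through hZ' hsep hq hp hz'z hiz' hb'
  simp only [Fintype.card_fin] at hle hle'
  obtain ⟨m, hm, hpm, hqm, hqm', hpm'⟩ : ∃ m ≤ 21, m ≡ 22 [MOD p] ∧ m ≡ 22 [MOD q] ∧
      9 ≤ m + q ∧ 9 ≤ m + p := by
    have key : ∀ p < 8, ∀ q < 8, 0 < p ∧ 0 < q ∧ p + q + 2 ≤ 10 ∧ p ≠ q →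
        22 - p.lcm q ≤ 21 ∧ (22 - p.lcm q) % p = 22 % p ∧ (22 - p.lcm q) % q = 22 % q ∧
          9 ≤ 22 - p.lcm q + q ∧ 9 ≤ 22 - p.lcm q + p := by
      decide
    exact ⟨_, key p (by omega) q (by omega) ⟨hp0, hq0, hcount, hpq⟩⟩
  have hsub : ∀ {r s t}, s + r = 22 → t ≡ s [MOD r] → m ≡ 22 [MOD r] → t ≤ m → r ∣ m - t := by
    intro r s t hsr hts hmr htm
    refine (Nat.modEq_iff_dvd' htm).1 (hts.trans (Nat.ModEq.trans ?_ hmr.symm))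
    rw [← hsr]
    simp [Nat.ModEq]
  have hpd := hsub (by omega) hmod hpm (by omega)
  have hqd := hsub (by omega) hmod' hqm (by omega)
  have hyj : HasWalk A (m - c) y j :=
    ((hy.hasWalk.of_dvd hpd).append hd).congr (by omega)
  have hyj' : HasWalk A (m - c') y' j :=
    ((hy'.hasWalk.of_dvd hqd).append hd').congr (by omega)
  have hyy' := not_reaches_of_period_ne hZ hsep hy hy' hpq
  have hy'y := not_reaches_of_period_ne hZ hsep hy' hy hpq.symm
  obtain ⟨x, hix, hxj, hx⟩ : ∃ x, HasWalk A c i x ∧ HasWalk A (m - c) x j ∧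
      (Reaches A x y' ∨ Reaches A y' x) := by
    rcases le_total c c' with h | h
    · obtain ⟨x, h₁, h₂⟩ := hasWalk_add.1 (hc'.congr (show c' = c + (c' - c) by omega))
      exact ⟨x, h₁, (h₂.append hyj').congr (by omega), .inl h₂.reaches⟩
    · obtain ⟨x, h₁, h₂⟩ := hasWalk_add.1 (hyj'.congr (show m - c' = c - c' + (m - c) by omega))
      exact ⟨x, (hc'.append h₁).congr (by omega), h₂, .inr h₁.reaches⟩
  obtain rfl := HasWalk.unique (hZ (c + (m - c)) (by omega)) hc hyj hix hxj
  exact hx.elim hyy' hy'y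

/-- A shortest walk, of length `d`, that leads from a vertex `x` on a cycle of length `p` to a
vertex `y` on a cycle of length `q` in another strong component. -/
structure IsMinLink (A : Matrix (Fin 10) (Fin 10) ℕ) (x y : Fin 10) (p q d : ℕ) : Prop where
  source : IsPeriod A x p
  target : IsPeriod A y q
  walk : HasWalk A d x y
  not_reaches : ¬ Reaches A y x
  min : ∀ x' y' p' q' d', IsPeriod A x' p' → IsPeriod A y' q' → HasWalk A d' x' y' →
    ¬ Reaches A y' x' → d ≤ d'

theorem exists_isMinLink (hZ : ∀ m ≤ 21, IsZO (A ^ m)) (h22 : ¬ IsZO (A ^ 22)) :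
    ∃ x y p q d, IsMinLink A x y p q d := by
  classical
  have hex : ∃ d x y p q, IsPeriod A x p ∧ IsPeriod A y q ∧ HasWalk A d x y ∧
      ¬ Reaches A y x := by
    obtain ⟨x, y, p, q, hp, hq, ⟨d, hd⟩, hyx⟩ := exists_linked_cycles hZ h22
    exact ⟨d, x, y, p, q, hp, hq, hd, hyx⟩
  obtain ⟨x, y, p, q, hp, hq, hd, hyx⟩ := Nat.find_spec hex
  exact ⟨x, y, p, q, _, hp, hq, hd, hyx, fun x' y' p' q' d' hp' hq' hd' hyx' =>
    Nat.find_min' hex ⟨x', y', p', q', hp', hq', hd', hyx'⟩⟩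

namespace IsMinLink

variable {x y : Fin 10} {p q d : ℕ}

theorem pos (h : IsMinLink A x y p q d) : 0 < d := by
  rcases Nat.eq_zero_or_pos d with rfl | hd
  · exact absurd (hasWalk_zero.1 h.walk ▸ Reaches.refl x) h.not_reaches
  · exact hd

theorem not_closed (h : IsMinLink A x y p q d) {z : Fin 10} {a b m : ℕ} (ha : 0 < a)
    (hb : 0 < b) (hab : a + b = d) (hxz : HasWalk A a x z) (hzy : HasWalk A b z y)
    (hm : 0 < m) : ¬ HasWalk A m z z := by
  intro hz
  obtain ⟨r, hr⟩ := hz.exists_isPeriod hm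
  by_cases hzx : Reaches A z x
  · have := h.min z y r q b hr h.target hzy fun hyz => h.not_reaches (hyz.trans hzx)
    omega
  · have := h.min x z p r a h.source hr hxz hzx
    omega

theorem not_reaches_source (h : IsMinLink A x y p q d) {z : Fin 10} {a b : ℕ} (ha : 0 < a)
    (hab : a + b = d) (hxz : HasWalk A a x z) (hzy : HasWalk A b z y) : ¬ Reaches A z x := by
  rintro ⟨m, hm⟩
  rcases Nat.eq_zero_or_pos b with rfl | hb
  · rw [hasWalk_zero] at hzy
    exact h.not_reaches (hzy ▸ hm.reaches)
  · exact h.not_closed ha hb hab hxz hzy (by omega) (hm.append hxz)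

theorem card_le (h : IsMinLink A x y p q d) : p + q + d ≤ 11 := by
  obtain ⟨c, hc0, hc, hcinj⟩ := h.source.exists_cycle
  obtain ⟨k, hk0, hk, hkinj⟩ := h.target.exists_cycle
  obtain ⟨w, hw0, hwd, hw⟩ := h.walk.exists_vertices
  have hp0 := h.source.pos
  have hq0 := h.target.pos
  have hd0 := h.pos
  have hinner : ∀ t, 0 < t → t < d → ∀ m, 0 < m → ¬ HasWalk A m (w t) (w t) := by
    intro t ht htd m hm
    have h₁ := hasWalk_of_steps hw (Nat.zero_le t) htd.le
    have h₂ := hasWalk_of_steps hw htd.le le_rfl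
    rw [hw0] at h₁
    rw [hwd] at h₂
    exact h.not_closed (by omega) (by omega) (by omega) h₁ h₂ hm
  let F : Fin p ⊕ Fin (d - 1) ⊕ Fin q → Fin 10 :=
    Sum.elim (fun t => c t) (Sum.elim (fun t => w (t + 1)) (fun t => k t))
  have hF : Injective F := by
    refine Injective.sumElim (cycle_injective hcinj)
      (Injective.sumElim ?_ (cycle_injective hkinj) ?_) ?_
    · have key : ∀ s t, s < t → t < d - 1 → w (s + 1) ≠ w (t + 1) := by
        intro s t hst ht heq
        have := hasWalk_of_steps hw (show s + 1 ≤ t + 1 by omega) (by omega)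
        rw [← heq] at this
        exact hinner (s + 1) (by omega) (by omega) _ (by omega) this
      intro s t hst
      rcases lt_trichotomy (s : ℕ) t with hlt | heq | hlt
      · exact absurd hst (key _ _ hlt t.2)
      · exact Fin.ext heq
      · exact absurd hst.symm (key _ _ hlt s.2)
    · intro s t hst
      have hs := s.2
      refine hinner (s + 1) (by omega) (by omega) q hq0 ?_
      rw [hst, show HasWalk A q (k t) (k t) ↔ HasWalk A q (k t) (k (t + q)) by
        rw [(hkinj (t + q) t).2 (by simp)]]
      exact hk t q
    · rintro s (t | t) hst <;> simp only [Sum.elim_inl, Sum.elim_inr] at hst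
      · have ht := t.2
        refine hinner (t + 1) (by omega) (by omega) p hp0 ?_
        rw [← hst, show HasWalk A p (c s) (c s) ↔ HasWalk A p (c s) (c (s + p)) by
          rw [(hcinj (s + p) s).2 (by simp)]]
        exact hc s p
      · have h₁ := cycle_reaches hq0 hk hkinj 0 t
        have h₂ := cycle_reaches hp0 hc hcinj s 0
        rw [hk0, ← hst] at h₁
        rw [hc0] at h₂
        exact h.not_reaches (h₁.trans h₂)
  have := Fintype.card_le_of_injective F hF
  simp at this
  omega

theorem le_lcm_add (h : IsMinLink A x y p q d) (hZ : ∀ m ≤ 21, IsZO (A ^ m)) :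
    22 ≤ p.lcm q + d := by
  by_contra hlt
  have hd0 := h.pos
  have hp0 := h.source.pos
  have hlcm : 0 < p.lcm q := Nat.lcm_pos hp0 h.target.pos
  obtain ⟨z, hxz, hzy⟩ := hasWalk_add.1 (h.walk.congr (show d = 1 + (d - 1) by omega))
  obtain ⟨z', hxz', hzx'⟩ := hasWalk_add.1 ((h.source.hasWalk.of_dvd
    (Nat.dvd_lcm_left p q)).congr (show p.lcm q = 1 + (p.lcm q - 1) by omega))
  refine h.not_reaches_source one_pos (show 1 + (d - 1) = d by omega) hxz hzy ?_
  obtain rfl : z = z' := HasWalk.unique (hZ (1 + (d - 1 + p.lcm q)) (by omega)) hxz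
    (hzy.append (h.target.hasWalk.of_dvd (Nat.dvd_lcm_right p q))) hxz'
    ((hzx'.append h.walk).congr (by omega))
  exact hzx'.reaches

theorem cases (h : IsMinLink A x y p q d) (hZ : ∀ m ≤ 21, IsZO (A ^ m)) :
    (p = 3 ∧ q = 7 ∧ d = 1) ∨ (p = 7 ∧ q = 3 ∧ d = 1) ∨
      (p = 4 ∧ q = 5 ∧ d = 2) ∨ (p = 5 ∧ q = 4 ∧ d = 2) := by
  have h₁ := h.card_le
  have h₂ := h.le_lcm_add hZ
  have hp0 := h.source.pos
  have hq0 := h.target.pos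
  have hd0 := h.pos
  have key : ∀ p q : Fin 10, (p + q : ℕ) ≤ 10 → 11 + (p + q : ℕ) ≤ (p : ℕ).lcm q →
      ((p : ℕ), (q : ℕ)) ∈ [(3, 7), (7, 3), (4, 5), (5, 4)] := by
    decide
  have hmem := key ⟨p, by omega⟩ ⟨q, by omega⟩ (by dsimp only; omega) (by dsimp only; omega)
  simp only [List.mem_cons, Prod.mk.injEq, List.not_mem_nil, or_false] at hmem
  obtain ⟨rfl, rfl⟩ | ⟨rfl, rfl⟩ | ⟨rfl, rfl⟩ | ⟨rfl, rfl⟩ := hmem <;>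
  simp [Nat.lcm] at h₂ ⊢ <;> omega

end IsMinLink

/-- Two walks of length 21 that leave a cycle at different times have different ends. -/
theorem no_detour (hZ : ∀ m ≤ 21, IsZO (A ^ m)) {c : ℕ → Fin 10} {p s : ℕ} {z t : Fin 10}
    (hp : 0 < p) (hc : ∀ t n, HasWalk A n (c t) (c (t + n)))
    (hinj : ∀ s t, c s = c t ↔ s % p = t % p) (hs : 0 < s) (hs' : s ≤ 21)
    (hst : HasWalk A (21 - s) (c s) t) (hz : HasWalk A 1 (c 0) z) (hzt : HasWalk A 20 z t)
    (hzc : ¬ Reaches A z (c 0)) : False := by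
  have h₁ := hc 1 (s - 1)
  rw [Nat.add_sub_cancel' hs] at h₁
  obtain rfl := HasWalk.unique (hZ (1 + 20) le_rfl) hz hzt (hc 0 1)
    ((h₁.append hst).congr (by omega))
  exact hzc (cycle_reaches hp hc hinj _ _)

theorem cycle_apply (hZ : ∀ m ≤ 21, IsZO (A ^ m)) {c : ℕ → Fin 10} {p : ℕ} (hp : 0 < p)
    (hc : ∀ t n, HasWalk A n (c t) (c (t + n))) (hinj : ∀ s t, c s = c t ↔ s % p = t % p)
    (a b : Fin p) : A (c a) (c b) = Cmat p a b := by
  have hA : A (c a) (c b) ≤ 1 := by simpa using hZ 1 (by omega) (c a) (c b)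
  have hnext : c (a + 1) = c b ↔ (b : ℕ) = (a + 1) % p := by
    rw [hinj, Nat.mod_eq_of_lt b.2, eq_comm]
  by_cases hb : (b : ℕ) = (a + 1) % p
  · have := hc a 1
    rw [hnext.2 hb, hasWalk_one] at this
    simp only [Cmat, Matrix.of_apply, if_pos hb]
    omega
  · simp only [Cmat, Matrix.of_apply, if_neg hb]
    by_contra hne
    exact hb (hnext.1 (step_unique (IsZO.pow_le_two_mul_card hZ) (hc a 1)
      (cycle_reaches hp hc hinj _ _) (hasWalk_one.2 (Nat.pos_of_ne_zero hne))
      (cycle_reaches hp hc hinj _ _)))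

theorem eq_reindex {β : Type*} {e : β ≃ Fin 10} {M : Matrix β β ℕ}
    (h : ∀ a b, A (e a) (e b) = M a b) : A = Matrix.reindex e e M := by
  ext i j
  simp [← h]

theorem exists_reindex_fromBlocks (hZ : ∀ m ≤ 21, IsZO (A ^ m)) {x y : Fin 10} {p q : ℕ}
    (h : IsMinLink A x y p q 1) (hpq : p + q = 10)
    (hcrt : ∀ a < p, ∀ b < q, (a = 0 ∧ b = 0) ∨ ∃ s < 21, 0 < s ∧ s % p = a ∧ s % q = b) :
    ∃ X : Matrix (Fin p) (Fin q) ℕ, IsZO X ∧ (∃! ij : Fin p × Fin q, X ij.1 ij.2 ≠ 0) ∧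
      ∃ e : (Fin p ⊕ Fin q) ≃ Fin 10,
        A = Matrix.reindex e e (Matrix.fromBlocks (Cmat p) X 0 (Cmat q)) := by
  obtain ⟨c, hc0, hc, hcinj⟩ := h.source.exists_cycle
  obtain ⟨k, hk0, hk, hkinj⟩ := h.target.exists_cycle
  have hp0 := h.source.pos
  have hq0 := h.target.pos
  have hback : ∀ s t, ¬ Reaches A (k s) (c t) := fun s t hst => h.not_reaches
    (hk0 ▸ hc0 ▸ (cycle_reaches hq0 hk hkinj 0 s).trans
      (hst.trans (cycle_reaches hp0 hc hcinj t 0)))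
  let F : Fin p ⊕ Fin q → Fin 10 := Sum.elim (fun t => c t) (fun t => k t)
  have hF : Injective F := by
    refine Injective.sumElim (cycle_injective hcinj) (cycle_injective hkinj) ?_
    intro s t hst
    exact hback t s (hst ▸ Reaches.refl _)
  have hxy : HasWalk A 1 (c 0) (k 0) := hc0 ▸ hk0 ▸ h.walk
  refine ⟨Matrix.of fun a b => A (c a) (k b), fun a b => by simpa using hZ 1 (by omega) _ _,
    ⟨(⟨0, hp0⟩, ⟨0, hq0⟩), (hasWalk_one.1 hxy).ne', ?_⟩,
    Equiv.ofBijective F ((Fintype.bijective_iff_injective_and_card F).2 ⟨hF, by simp [hpq]⟩), ?_⟩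
  · rintro ⟨a, b⟩ hab
    have hab' : HasWalk A 1 (c a) (k b) := hasWalk_one.2 (Nat.pos_of_ne_zero hab)
    rcases hcrt a a.2 b b.2 with ⟨ha, hb⟩ | ⟨s, hs, hs0, hsa, hsb⟩
    · exact Prod.ext (Fin.ext ha) (Fin.ext hb)
    · exfalso
      rw [← (hcinj s a).2 (by simp [← hsa]), ← (hkinj s b).2 (by simp [← hsb])] at hab'
      refine no_detour hZ hp0 hc hcinj hs0 hs.le ((hab'.append (hk s (20 - s))).congr (by omega))
        hxy ?_ (hback 0 0)
      have := hk 0 20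
      rwa [show s + (20 - s) = 0 + 20 by omega]
  · refine eq_reindex ?_
    rintro (a | a) (b | b)
    · exact cycle_apply hZ hp0 hc hcinj a b
    · rfl
    · by_contra hne
      exact hback a b (hasWalk_one.2 (Nat.pos_of_ne_zero hne)).reaches
    · exact cycle_apply hZ hq0 hk hkinj a b

theorem exists_reindex_Hmat (hZ : ∀ m ≤ 21, IsZO (A ^ m)) {x y : Fin 10} {p q : ℕ}
    (h : IsMinLink A x y p q 2) (hpq : p + q = 9)
    (hcrt : ∀ a < p, ∀ b < q, (a = 0 ∧ b = 0) ∨ ∃ s < 20, 0 < s ∧ s % p = a ∧ s % q = b) :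
    ∃ (u : Fin p → ℕ) (v : Fin q → ℕ), (∀ a, u a ≤ 1) ∧ (∀ b, v b ≤ 1) ∧
      (∃! a, u a ≠ 0) ∧ (∃! b, v b ≠ 0) ∧
      ∃ e : (Fin p ⊕ Unit ⊕ Fin q) ≃ Fin 10, A = Matrix.reindex e e (Hmat p q u v) := by
  obtain ⟨c, hc0, hc, hcinj⟩ := h.source.exists_cycle
  obtain ⟨k, hk0, hk, hkinj⟩ := h.target.exists_cycle
  obtain ⟨w, hxw, hwy⟩ := hasWalk_add.1 (h.walk.congr (show 2 = 1 + 1 by omega))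
  have hp0 := h.source.pos
  have hq0 := h.target.pos
  have hback : ∀ s t, ¬ Reaches A (k s) (c t) := fun s t hst => h.not_reaches
    (hk0 ▸ hc0 ▸ (cycle_reaches hq0 hk hkinj 0 s).trans
      (hst.trans (cycle_reaches hp0 hc hcinj t 0)))
  have hww : ∀ m, 0 < m → ¬ HasWalk A m w w := fun m hm =>
    h.not_closed one_pos one_pos rfl hxw hwy hm
  have hwc : ∀ t, ¬ Reaches A w (c t) := by
    intro t ht
    refine h.not_reaches_source one_pos rfl hxw hwy ?_
    exact hc0 ▸ ht.trans (cycle_reaches hp0 hc hcinj t 0)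
  have hkw : ∀ t, ¬ Reaches A (k t) w := by
    intro t ht
    obtain ⟨m, hm⟩ := (hk0 ▸ cycle_reaches hq0 hk hkinj 0 t : Reaches A y (k t)).trans ht
    exact hww _ (by omega) (hwy.append hm)
  rw [← hc0] at hxw
  rw [← hk0] at hwy
  let F : Fin p ⊕ Unit ⊕ Fin q → Fin 10 := Sum.elim (fun t => c t) (Sum.elim (fun _ => w)
    (fun t => k t))
  have hF : Injective F := by
    refine Injective.sumElim (cycle_injective hcinj)
      (Injective.sumElim (injective_of_subsingleton _) (cycle_injective hkinj) ?_) ?_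
    · intro _ t hst
      exact hkw t (hst ▸ Reaches.refl _)
    · rintro s (t | t) hst
      · exact hwc s (hst ▸ Reaches.refl _)
      · exact hback t s (hst ▸ Reaches.refl _)
  have hw19 : HasWalk A 20 w (k 19) := by simpa using hwy.append (hk 0 19)
  have hdirect : ∀ a < p, ∀ b < q, HasWalk A 1 (c a) w → HasWalk A 1 w (k b) →
      a = 0 ∧ b = 0 := by
    intro a ha b hb hac hbk
    refine (hcrt a ha b hb).resolve_right ?_
    rintro ⟨s, hs, hs0, hsa, hsb⟩
    rw [← (hcinj s a).2 (by simp [← hsa])] at hac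
    rw [← (hkinj s b).2 (by simp [← hsb])] at hbk
    refine no_detour hZ hp0 hc hcinj hs0 (by omega)
      (((hac.append hbk).append (hk s (19 - s))).congr (by omega)) hxw ?_ (hwc 0)
    rwa [show s + (19 - s) = 19 by omega]
  have hle : ∀ a b, A a b ≤ 1 := by simpa [IsZO] using hZ 1 (by omega)
  refine ⟨fun a => A (c a) w, fun b => A w (k b), fun a => hle _ _, fun b => hle _ _,
    ⟨⟨0, hp0⟩, (hasWalk_one.1 hxw).ne', fun a ha => ?_⟩,
    ⟨⟨0, hq0⟩, (hasWalk_one.1 hwy).ne', fun b hb => ?_⟩,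
    Equiv.ofBijective F ((Fintype.bijective_iff_injective_and_card F).2
      ⟨hF, by simp; omega⟩), ?_⟩
  · exact Fin.ext (hdirect a a.2 0 hq0 (hasWalk_one.2 (Nat.pos_of_ne_zero ha)) hwy).1
  · exact Fin.ext (hdirect 0 hp0 b b.2 hxw (hasWalk_one.2 (Nat.pos_of_ne_zero hb))).2
  · refine eq_reindex ?_
    have hstep : ∀ {i j}, A i j ≠ 0 → HasWalk A 1 i j := fun hne =>
      hasWalk_one.2 (Nat.pos_of_ne_zero hne)
    rintro (a | a | a) (b | b | b)
    · exact cycle_apply hZ hp0 hc hcinj a b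
    · rfl
    · by_contra hne
      have hper : ∀ {r t} {f : ℕ → Fin 10}, 0 < r → (∀ t n, HasWalk A n (f t) (f (t + n))) →
          (∀ s t, f s = f t ↔ s % r = t % r) → ∃ r', IsPeriod A (f t) r' := by
        intro r t f hr hf hfinj
        have := hf t r
        rw [(hfinj (t + r) t).2 (by simp)] at this
        exact this.exists_isPeriod hr
      obtain ⟨p', hp'⟩ := hper (t := a) hp0 hc hcinj
      obtain ⟨q', hq'⟩ := hper (t := b) hq0 hk hkinj
      have := h.min _ _ _ _ 1 hp' hq' (hstep hne) (hback b a)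
      omega
    · by_contra hne
      exact hwc b (hstep hne).reaches
    · by_contra hne
      exact hww 1 one_pos (hstep hne)
    · rfl
    · by_contra hne
      exact hback a b (hstep hne).reaches
    · by_contra hne
      exact hkw a (hstep hne).reaches
    · exact cycle_apply hZ hq0 hk hkinj a b

end Structure

section FunctionalGraph

variable {α : Type*} [Fintype α] [DecidableEq α]

/-- The digraph with the arcs `x → f x` and one further arc `u → v`. -/
def arcMatrix (f : α → α) (u v : α) : Matrix α α ℕ :=
  Matrix.of fun i j => if j = f i ∨ (i = u ∧ j = v) then 1 else 0

variable {f : α → α} {u v : α}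

theorem hasWalk_one_arcMatrix {i j : α} :
    HasWalk (arcMatrix f u v) 1 i j ↔ j = f i ∨ (i = u ∧ j = v) := by
  rw [hasWalk_one, arcMatrix, Matrix.of_apply]
  split_ifs with h <;> simp [h]

theorem hasWalk_iterate (m : ℕ) (i : α) : HasWalk (arcMatrix f u v) m i (f^[m] i) := by
  induction m with
  | zero => exact hasWalk_zero.2 rfl
  | succ m ih =>
    rw [iterate_succ_apply']
    exact ih.append (hasWalk_one_arcMatrix.2 (.inl rfl))

/-- A walk either follows `f`, or uses the additional arc, and then just once. -/
theorem HasWalk.iterate_or (hv : ∀ n, f^[n] v ≠ u) {m : ℕ} {i j : α}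
    (h : HasWalk (arcMatrix f u v) m i j) :
    j = f^[m] i ∨ ∃ s n, s + 1 + n = m ∧ f^[s] i = u ∧ j = f^[n] v := by
  induction m generalizing j with
  | zero => exact .inl (hasWalk_zero.1 h).symm
  | succ m ih =>
    obtain ⟨k, hik, hkj⟩ := hasWalk_add.1 h
    rw [hasWalk_one_arcMatrix] at hkj
    rcases ih hik with rfl | ⟨s, n, hsn, hs, rfl⟩
    · rcases hkj with rfl | ⟨hu, rfl⟩
      · exact .inl (iterate_succ_apply' ..).symm
      · exact .inr ⟨m, 0, rfl, hu, rfl⟩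
    · rcases hkj with rfl | ⟨hu, -⟩
      · exact .inr ⟨s, n + 1, by omega, hs, (iterate_succ_apply' ..).symm⟩
      · exact absurd hu (hv n)

theorem isZO_pow_arcMatrix {N : ℕ} (hv : ∀ n, f^[n] v ≠ u) (hu : ∃ p, 0 < p ∧ f^[p] u = u)
    (hN : ∀ s n, f^[s] u = u → f^[s + n] v = f^[n] v → 0 < s → N ≤ s + n) {m : ℕ}
    (hm : m ≤ N) : IsZO (arcMatrix f u v ^ m) := by
  have h₁ : IsZO (arcMatrix f u v) := fun i j => by
    rw [arcMatrix, Matrix.of_apply]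
    split_ifs <;> simp
  induction m with
  | zero =>
    intro i j
    rw [pow_zero, Matrix.one_apply]
    split_ifs <;> simp
  | succ m ih =>
    by_contra hcon
    obtain ⟨i, j, k, k', hne, hik, hkj, hik', hkj'⟩ := exists_hasWalk_ne h₁ (ih (by omega)) hcon
    wlog hk : k = f i generalizing k k'
    · refine this k' k hne.symm hik' hkj' hik hkj ?_
      rw [hasWalk_one_arcMatrix] at hik hik'
      rcases hik' with h' | ⟨-, h'⟩
      · exact h'
      · exact absurd (((hik.resolve_left hk).2).trans h'.symm) hne
    subst hk
    rw [hasWalk_one_arcMatrix] at hik'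
    obtain ⟨rfl, rfl⟩ := hik'.resolve_left hne.symm
    have hj : j = f^[m] k' := by
      rcases hkj'.iterate_or hv with h | ⟨s, n, -, h, -⟩
      · exact h
      · exact absurd h (hv s)
    rcases hkj.iterate_or hv with h | ⟨s, n, hsn, hs, hjn⟩
    · obtain ⟨p, hp0, hp⟩ := hu
      have hret : f^[p * (m + 1) - (m + 1)] (f^[m + 1] i) = i := by
        rw [← iterate_add_apply, Nat.sub_add_cancel (Nat.le_mul_of_pos_left _ hp0),
          iterate_mul]
        exact iterate_fixed hp _
      rw [iterate_succ_apply, ← h, hj, ← iterate_add_apply] at hret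
      exact hv _ hret
    · have := hN (s + 1) n hs (by rw [hsn, ← hj, hjn]) (by omega)
      omega

theorem not_isZO_pow_arcMatrix (hv : ∀ n, f^[n] v ≠ u) {s n : ℕ} (hs : 0 < s)
    (hu : f^[s] u = u) (hn : f^[s + n] v = f^[n] v) :
    ¬ IsZO (arcMatrix f u v ^ (s + n + 1)) := by
  intro hZ
  rw [add_comm] at hZ
  have huv : HasWalk (arcMatrix f u v) 1 u v := hasWalk_one_arcMatrix.2 (.inr ⟨rfl, rfl⟩)
  have hback : f^[s - 1] (f u) = u := by
    rw [← iterate_succ_apply, Nat.succ_eq_add_one, Nat.sub_add_cancel hs, hu]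
  have h₁ : HasWalk (arcMatrix f u v) (s + n) (f u) (f^[n] v) := by
    have := hasWalk_iterate (f := f) (u := u) (v := v) (s - 1) (f u)
    rw [hback] at this
    exact ((this.append huv).append (hasWalk_iterate n v)).congr (by omega)
  have h₂ : HasWalk (arcMatrix f u v) (s + n) v (f^[n] v) := hn ▸ hasWalk_iterate _ _
  have h := HasWalk.unique hZ (hasWalk_one_arcMatrix.2 (.inl rfl)) h₁ huv h₂
  rw [h] at hback
  exact hv _ hback

end FunctionalGraph

section StableIndex

variable {α β : Type*} [Fintype α] [DecidableEq α] [Fintype β] [DecidableEq β]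

theorem theta_eq_iff {A : Matrix α α ℕ} {N : ℕ} (hN : 1 ≤ N) :
    theta A = N ↔ ¬ IsZO (A ^ (N + 1)) ∧ ∀ k, 1 ≤ k → k < N → IsZO (A ^ (k + 1)) := by
  constructor
  · intro h
    have hlow : ∀ k, 1 ≤ k → k < N → IsZO (A ^ (k + 1)) := by
      intro k hk hkN
      by_contra hZ
      have : theta A ≤ k := sInf_le ⟨k, ⟨hk, hZ⟩, rfl⟩
      rw [h] at this
      exact absurd (Nat.cast_le.1 this) (not_le.2 hkN)
    refine ⟨fun hZ => ?_, hlow⟩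
    have : ((N + 1 : ℕ) : ℕ∞) ≤ theta A := by
      refine le_sInf ?_
      rintro _ ⟨k, ⟨hk, hk'⟩, rfl⟩
      refine Nat.cast_le.2 ?_
      by_contra hlt
      rcases Nat.lt_or_ge k N with h' | h'
      · exact hk' (hlow k hk h')
      · obtain rfl : k = N := by omega
        exact hk' hZ
    rw [h] at this
    exact absurd (Nat.cast_le.1 this) (by omega)
  · rintro ⟨h₁, h₂⟩
    refine le_antisymm (sInf_le ⟨N, ⟨hN, h₁⟩, rfl⟩) (le_sInf ?_)
    rintro _ ⟨k, ⟨hk, hk'⟩, rfl⟩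
    exact Nat.cast_le.2 (not_lt.1 fun hlt => hk' (h₂ k hk hlt))

theorem theta_reindex (e : α ≃ β) (M : Matrix α α ℕ) :
    theta (Matrix.reindex e e M) = theta M := by
  have hpow : ∀ k, Matrix.reindex e e M ^ k = Matrix.reindex e e (M ^ k) := fun k =>
    (map_pow (Matrix.reindexAlgEquiv ℕ ℕ e) M k).symm
  have hZ : ∀ k, IsZO (Matrix.reindex e e M ^ k) ↔ IsZO (M ^ k) := by
    intro k
    rw [hpow]
    exact ⟨fun h i j => by simpa using h (e i) (e j), fun h i j => h _ _⟩
  simp only [theta, hZ]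

theorem theta_arcMatrix {f : α → α} {u v : α} {s n : ℕ} (hv : ∀ n, f^[n] v ≠ u) (hs : 0 < s)
    (hu : f^[s] u = u) (hn : f^[s + n] v = f^[n] v)
    (hmin : ∀ s' n', f^[s'] u = u → f^[s' + n'] v = f^[n'] v → 0 < s' → s + n ≤ s' + n') :
    theta (arcMatrix f u v) = (s + n : ℕ) :=
  (theta_eq_iff (by omega)).2 ⟨not_isZO_pow_arcMatrix hv hs hu hn, fun _ _ hk =>
    isZO_pow_arcMatrix hv ⟨s, hs, hu⟩ hmin hk⟩

/-- The cyclic shift of `Fin n`. -/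
def rotate {n : ℕ} (i : Fin n) : Fin n := ⟨(i + 1) % n, Nat.mod_lt _ i.pos⟩

theorem iterate_rotate {n : ℕ} (i : Fin n) (t : ℕ) :
    ((rotate^[t] i : Fin n) : ℕ) = (i + t) % n := by
  induction t with
  | zero => simp [Nat.mod_eq_of_lt i.2]
  | succ t ih =>
    rw [iterate_succ_apply', rotate]
    simp only [ih, Nat.mod_add_mod, add_assoc]

theorem iterate_rotate_add_eq_iff {n : ℕ} (i : Fin n) (s t : ℕ) :
    rotate^[s + t] i = rotate^[t] i ↔ n ∣ s := by
  rw [Fin.ext_iff, iterate_rotate, iterate_rotate, show (i : ℕ) + (s + t) = i + t + s by ring]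
  change i + t + s ≡ i + t [MOD n] ↔ n ∣ s
  rw [Nat.add_modEq_left_iff]

theorem iterate_rotate_eq_iff {n : ℕ} (i : Fin n) (s : ℕ) : rotate^[s] i = i ↔ n ∣ s :=
  iterate_rotate_add_eq_iff i s 0

theorem Cmat_apply {n : ℕ} (i j : Fin n) : Cmat n i j = if j = rotate i then 1 else 0 := by
  simp [Cmat, rotate, Fin.ext_iff]

theorem eq_one_iff_of_existsUnique {ι : Type*} {w : ι → ℕ} (hle : ∀ i, w i ≤ 1) {i₀ : ι}
    (h₀ : w i₀ ≠ 0) (huniq : ∀ i, w i ≠ 0 → i = i₀) (i : ι) [Decidable (i = i₀)] :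
    w i = if i = i₀ then 1 else 0 := by
  split_ifs with h
  · subst h
    have := hle i
    omega
  · by_contra hne
    exact h (huniq i hne)

theorem theta_fromBlocks {p q : ℕ} {X : Matrix (Fin p) (Fin q) ℕ} (hX : IsZO X)
    (hu : ∃! ij : Fin p × Fin q, X ij.1 ij.2 ≠ 0) :
    theta (Matrix.fromBlocks (Cmat p) X 0 (Cmat q)) = (p.lcm q : ℕ) := by
  obtain ⟨⟨a, b⟩, h₀, huniq⟩ := hu
  have hX' := eq_one_iff_of_existsUnique (w := fun ij : Fin p × Fin q => X ij.1 ij.2)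
    (fun ij => hX _ _) h₀ huniq
  have hM : Matrix.fromBlocks (Cmat p) X 0 (Cmat q) =
      arcMatrix (Sum.map rotate rotate) (.inl a) (.inr b) := by
    ext (i | i) (j | j)
    · simp [arcMatrix, Cmat_apply]
    · simpa [arcMatrix] using hX' (i, j)
    · simp [arcMatrix]
    · simp [arcMatrix, Cmat_apply]
  have hl : ∀ n, (Sum.map rotate rotate)^[n] (.inl a : Fin p ⊕ Fin q) = .inl (rotate^[n] a) := by
    intro n
    induction n with
    | zero => rfl
    | succ n ih => rw [iterate_succ_apply', ih, iterate_succ_apply']; rfl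
  have hr : ∀ n, (Sum.map rotate rotate)^[n] (.inr b : Fin p ⊕ Fin q) = .inr (rotate^[n] b) := by
    intro n
    induction n with
    | zero => rfl
    | succ n ih => rw [iterate_succ_apply', ih, iterate_succ_apply']; rfl
  rw [hM, theta_arcMatrix (s := p.lcm q) (n := 0), add_zero]
  · simp [hr]
  · exact Nat.lcm_pos a.pos b.pos
  · rw [hl, (iterate_rotate_eq_iff a _).2 (Nat.dvd_lcm_left p q)]
  · rw [hr, hr, (iterate_rotate_add_eq_iff b _ 0).2 (Nat.dvd_lcm_right p q)]
  · intro s n h₁ h₂ hs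
    rw [hl, Sum.inl.injEq, iterate_rotate_eq_iff] at h₁
    rw [hr, hr, Sum.inr.injEq, iterate_rotate_add_eq_iff] at h₂
    have := Nat.le_of_dvd hs (Nat.lcm_dvd h₁ h₂)
    omega

theorem theta_Hmat {p q : ℕ} {u : Fin p → ℕ} {v : Fin q → ℕ} (hu : ∀ a, u a ≤ 1)
    (hv : ∀ b, v b ≤ 1) (hu' : ∃! a, u a ≠ 0) (hv' : ∃! b, v b ≠ 0) :
    theta (Hmat p q u v) = (p.lcm q + 1 : ℕ) := by
  obtain ⟨a, ha, hau⟩ := hu'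
  obtain ⟨b, hb, hbu⟩ := hv'
  have hU := eq_one_iff_of_existsUnique hu ha hau
  have hV := eq_one_iff_of_existsUnique hv hb hbu
  let f : Fin p ⊕ Unit ⊕ Fin q → Fin p ⊕ Unit ⊕ Fin q :=
    Sum.elim (fun i => .inl (rotate i)) (Sum.elim (fun _ => .inr (.inr b))
      (fun i => .inr (.inr (rotate i))))
  have hM : Hmat p q u v = arcMatrix f (.inl a) (.inr (.inl ())) := by
    ext (i | i | i) (j | j | j) <;> simp [arcMatrix, f, Hmat, Cmat_apply, hU, hV]
  have hl : ∀ n, f^[n] (.inl a) = .inl (rotate^[n] a) := by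
    intro n
    induction n with
    | zero => rfl
    | succ n ih => rw [iterate_succ_apply', ih, iterate_succ_apply']; rfl
  have hr : ∀ n, f^[n + 1] (.inr (.inl ())) = .inr (.inr (rotate^[n] b)) := by
    intro n
    induction n with
    | zero => rfl
    | succ n ih => rw [iterate_succ_apply', ih, iterate_succ_apply']; rfl
  rw [hM, theta_arcMatrix (s := p.lcm q) (n := 1)]
  · rintro (_ | n)
    · simp
    · simp [hr]
  · exact Nat.lcm_pos a.pos b.pos
  · rw [hl, (iterate_rotate_eq_iff a _).2 (Nat.dvd_lcm_left p q)]
  · rw [hr, hr 0, ← (iterate_rotate_add_eq_iff b _ 0).2 (Nat.dvd_lcm_right p q), add_zero]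
  · intro s n h₁ h₂ hs
    rw [hl, Sum.inl.injEq, iterate_rotate_eq_iff] at h₁
    rcases n with _ | n
    · obtain ⟨s, rfl⟩ := Nat.exists_eq_add_one.2 hs
      rw [add_zero, hr] at h₂
      simp at h₂
    · rw [← add_assoc, hr, hr, Sum.inr.injEq, Sum.inr.injEq, iterate_rotate_add_eq_iff] at h₂
      have := Nat.le_of_dvd hs (Nat.lcm_dvd h₁ h₂)
      omega

end StableIndex

theorem stmt_2 (A : Matrix (Fin 10) (Fin 10) ℕ) (hA : IsZO A)
    (hfin : theta A ≠ ⊤) :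
    g 10 = 21 ∧
    (theta A = (21 : ℕ∞) ↔
      (∃ X : Matrix (Fin 3) (Fin 7) ℕ, IsZO X ∧
          (∃! ij : Fin 3 × Fin 7, X ij.1 ij.2 ≠ 0) ∧
          ∃ e : (Fin 3 ⊕ Fin 7) ≃ Fin 10,
            A = Matrix.reindex e e (Matrix.fromBlocks (Cmat 3) X 0 (Cmat 7))) ∨
      (∃ X : Matrix (Fin 7) (Fin 3) ℕ, IsZO X ∧
          (∃! ij : Fin 7 × Fin 3, X ij.1 ij.2 ≠ 0) ∧
          ∃ e : (Fin 7 ⊕ Fin 3) ≃ Fin 10,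
            A = Matrix.reindex e e (Matrix.fromBlocks (Cmat 7) X 0 (Cmat 3))) ∨
      (∃ (u : Fin 4 → ℕ) (v : Fin 5 → ℕ),
          (∀ a, u a ≤ 1) ∧ (∀ b, v b ≤ 1) ∧
          (∃! a, u a ≠ 0) ∧ (∃! b, v b ≠ 0) ∧
          ∃ e : (Fin 4 ⊕ Unit ⊕ Fin 5) ≃ Fin 10,
            A = Matrix.reindex e e (Hmat 4 5 u v)) ∨
      (∃ (u : Fin 5 → ℕ) (v : Fin 4 → ℕ),
          (∀ a, u a ≤ 1) ∧ (∀ b, v b ≤ 1) ∧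
          (∃! a, u a ≠ 0) ∧ (∃! b, v b ≠ 0) ∧
          ∃ e : (Fin 5 ⊕ Unit ⊕ Fin 4) ≃ Fin 10,
            A = Matrix.reindex e e (Hmat 5 4 u v))) := by
  refine ⟨rfl, fun h => ?_, ?_⟩
  · obtain ⟨h22, hlow⟩ := (theta_eq_iff (N := 21) (by omega)).1 h
    have hZ : ∀ m ≤ 21, IsZO (A ^ m) := by
      rintro (_ | _ | m) hm
      · intro i j
        rw [pow_zero, Matrix.one_apply]
        split_ifs <;> simp
      · simpa using hA
      · exact hlow (m + 1) (by omega) (by omega)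
    obtain ⟨x, y, p, q, d, hlink⟩ := exists_isMinLink hZ h22
    rcases hlink.cases hZ with ⟨rfl, rfl, rfl⟩ | ⟨rfl, rfl, rfl⟩ | ⟨rfl, rfl, rfl⟩ |
      ⟨rfl, rfl, rfl⟩
    · exact .inl (exists_reindex_fromBlocks hZ hlink rfl (by decide))
    · exact .inr (.inl (exists_reindex_fromBlocks hZ hlink rfl (by decide)))
    · exact .inr (.inr (.inl (exists_reindex_Hmat hZ hlink rfl (by decide))))
    · exact .inr (.inr (.inr (exists_reindex_Hmat hZ hlink rfl (by decide))))
  · rintro (⟨X, hX, hX', e, rfl⟩ | ⟨X, hX, hX', e, rfl⟩ | ⟨u, v, hu, hv, hu', hv', e, rfl⟩ |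
      ⟨u, v, hu, hv, hu', hv', e, rfl⟩)
    · rw [theta_reindex, theta_fromBlocks hX hX']
      rfl
    · rw [theta_reindex, theta_fromBlocks hX hX']
      rfl
    · rw [theta_reindex, theta_Hmat hu hv hu' hv']
      rfl
    · rw [theta_reindex, theta_Hmat hu hv hu' hv']
      rfl
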